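/- arXiv:math/0410564 — 6 statements merged into one kernel-verified Lean document; each statement's English description precedes it below -/
import Mathlib

section
/- Let a > 0 and let ν : ℝ → ℝ be a convex function with ν(0) ≤ 0. Then inf_{λ > 0} ( λ + a/λ + ν(λ)/λ ) = inf_{0 < λ ≤ √a} ( λ + a/λ + ν(λ)/λ ). In particular, for every λ ≥ √a one has λ + a/λ + ν(λ)/λ ≥ √a + a/√a + ν(√a)/√a. -/
open Real Set

/-!
For `s = √a`, the summands `λ + a / λ` and `ν λ / λ` are both nondecreasing on `[s, ∞)`: the first
because its difference quotients `1 - a / (λ * μ)` are nonnegative there, the second because it is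
the slope of the secant of `ν` from `0` to `λ` plus `ν 0 / λ`, whose numerator is nonpositive.
Values `λ > s` therefore cannot lower the infimum.
-/

section OrderedField

variable {𝕜 : Type*} [Field 𝕜] [LinearOrder 𝕜] [IsStrictOrderedRing 𝕜]

theorem monotoneOn_div_id_of_convexOn_of_nonpos {s : Set 𝕜} {f : 𝕜 → 𝕜}
    (hf : ConvexOn 𝕜 s f) (hs : 0 ∈ s) (hf0 : f 0 ≤ 0) :
    MonotoneOn (fun x ↦ f x / x) (s ∩ Ioi 0) := by
  rintro x ⟨hxs, hx : 0 < x⟩ y ⟨hys, hy : 0 < y⟩ hxy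
  have secant_le : (f x - f 0) / x ≤ (f y - f 0) / y := by
    simpa only [sub_zero] using hf.secant_mono hs hxs hys hx.ne' hy.ne' hxy
  have intercept_le : f 0 / x ≤ f 0 / y := by
    simpa only [div_eq_mul_inv] using mul_le_mul_of_nonpos_left (inv_anti₀ hx hxy) hf0
  calc f x / x = (f x - f 0) / x + f 0 / x := by rw [← add_div, sub_add_cancel]
    _ ≤ (f y - f 0) / y + f 0 / y := add_le_add secant_le intercept_le
    _ = f y / y := by rw [← add_div, sub_add_cancel]

theorem monotoneOn_id_add_const_div {a s : 𝕜} (hs : 0 < s) (ha : a ≤ s ^ 2) :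
    MonotoneOn (fun x ↦ x + a / x) (Ici s) := by
  intro x (hx : s ≤ x) y (hy : s ≤ y) hxy
  have hx0 : 0 < x := hs.trans_le hx
  have hy0 : 0 < y := hs.trans_le hy
  have ha_le : a ≤ x * y := ha.trans (sq s ▸ mul_le_mul hx hy hs.le hx0.le)
  have difference_eq : y + a / y - (x + a / x) = (y - x) * (x * y - a) / (x * y) := by
    field_simp
    ring
  refine sub_nonneg.1 (difference_eq ▸ ?_)
  exact div_nonneg (mul_nonneg (sub_nonneg.2 hxy) (sub_nonneg.2 ha_le)) (mul_pos hx0 hy0).le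

end OrderedField

theorem sInf_image_Ioi_eq_sInf_image_Ioc_of_isMinOn {α β : Type*} [LinearOrder α]
    [ConditionallyCompleteLinearOrder β] {f : α → β} {b s : α}
    (hbs : b < s) (hf : IsMinOn f (Ici s) s) :
    sInf (f '' Ioi b) = sInf (f '' Ioc b s) := by
  apply csInf_eq_csInf_of_forall_exists_le
  · rintro _ ⟨x, hx, rfl⟩
    rcases le_total x s with hxs | hsx
    · exact ⟨f x, mem_image_of_mem f ⟨hx, hxs⟩, le_rfl⟩
    · exact ⟨f s, mem_image_of_mem f ⟨hbs, le_rfl⟩, hf hsx⟩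
  · rintro _ ⟨x, hx, rfl⟩
    exact ⟨f x, mem_image_of_mem f hx.1, le_rfl⟩

theorem stmt1_general (a : ℝ) (ha : 0 < a) (ν : ℝ → ℝ)
    (hν : MonotoneOn (fun l ↦ ν l / l) (Ici (Real.sqrt a))) :
    (sInf { x : ℝ | ∃ l : ℝ, 0 < l ∧ x = l + a / l + ν l / l } =
      sInf { x : ℝ | ∃ l : ℝ, 0 < l ∧ l ≤ Real.sqrt a ∧ x = l + a / l + ν l / l }) ∧
    ∀ l : ℝ, Real.sqrt a ≤ l →
      Real.sqrt a + a / Real.sqrt a + ν (Real.sqrt a) / Real.sqrt a ≤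
        l + a / l + ν l / l := by
  have hs : 0 < √a := Real.sqrt_pos.2 ha
  have hmono : MonotoneOn (fun l ↦ l + a / l + ν l / l) (Ici √a) :=
    (monotoneOn_id_add_const_div hs (Real.sq_sqrt ha.le).ge).add hν
  have hmin : IsMinOn (fun l ↦ l + a / l + ν l / l) (Ici √a) √a :=
    fun _ hl ↦ hmono self_mem_Ici hl hl
  refine ⟨?_, fun _ hl ↦ hmin hl⟩
  simpa only [image, mem_Ioi, mem_Ioc, and_assoc, eq_comm] using
    sInf_image_Ioi_eq_sInf_image_Ioc_of_isMinOn hs hmin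

/-- For `a > 0` and `ν : ℝ → ℝ` convex with `ν 0 ≤ 0`,
`inf_{λ>0} (λ + a/λ + ν(λ)/λ) = inf_{0<λ≤√a} (λ + a/λ + ν(λ)/λ)`, and for every
`λ ≥ √a`, `λ + a/λ + ν(λ)/λ ≥ √a + a/√a + ν(√a)/√a`. -/
theorem stmt1 (a : ℝ) (ha : 0 < a) (ν : ℝ → ℝ)
    (hconv : ConvexOn ℝ Set.univ ν) (h0 : ν 0 ≤ 0) :
    (sInf { x : ℝ | ∃ l : ℝ, 0 < l ∧ x = l + a / l + ν l / l } =
      sInf { x : ℝ | ∃ l : ℝ, 0 < l ∧ l ≤ Real.sqrt a ∧ x = l + a / l + ν l / l }) ∧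
    ∀ l : ℝ, Real.sqrt a ≤ l →
      Real.sqrt a + a / Real.sqrt a + ν (Real.sqrt a) / Real.sqrt a ≤
        l + a / l + ν l / l :=
  stmt1_general a ha ν <| (monotoneOn_div_id_of_convexOn_of_nonpos hconv (mem_univ 0) h0).mono
    fun _ hl ↦ ⟨mem_univ _, (Real.sqrt_pos.2 ha).trans_le hl⟩
end

section
/- Let a > 0 and let ρ : ℝ → ℝ be convex with ρ(0) = a. If there exists λ₂ > 0 such that ρ(λ₂) = −λ₂², then there exists λ₁ ∈ (0, √a] such that ρ(λ₁) = −λ₁². -/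
open Real Set

/-!
The line `x ↦ a - 2√a x` is tangent to the parabola `x ↦ -x²` at `√a` and passes through `(0, a)`.
If `ρ` is on or below the parabola at some `b ≥ √a`, then it is on or below this line at both `0`
and `b`, hence by convexity at `√a`, where line and parabola agree. So in all cases `ρ` starts
above the parabola at `0` and is on or below it somewhere in `(0, √a]`.
-/

theorem le_of_mem_segment_of_convexOn_of_concaveOn {𝕜 E β : Type*} [Semiring 𝕜] [PartialOrder 𝕜]
    [AddCommMonoid E] [SMul 𝕜 E] [AddCommMonoid β] [PartialOrder β] [IsOrderedAddMonoid β]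
    [SMul 𝕜 β] [PosSMulMono 𝕜 β] {S : Set E} {f g : E → β} {x y z : E}
    (hf : ConvexOn 𝕜 S f) (hg : ConcaveOn 𝕜 S g) (hx : x ∈ S) (hy : y ∈ S)
    (hfgx : f x ≤ g x) (hfgy : f y ≤ g y) (hz : z ∈ segment 𝕜 x y) : f z ≤ g z := by
  obtain ⟨a, b, ha, hb, hab, rfl⟩ := hz
  calc
    f (a • x + b • y) ≤ a • f x + b • f y := hf.2 hx hy ha hb hab
    _ ≤ a • g x + b • g y := by gcongr
    _ ≤ g (a • x + b • y) := hg.2 hx hy ha hb hab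

theorem exists_mem_Ioc_eq_of_lt_of_le {α β : Type*} [ConditionallyCompleteLinearOrder α]
    [TopologicalSpace α] [OrderTopology α] [DenselyOrdered α] [LinearOrder β] [TopologicalSpace β]
    [OrderClosedTopology β] {f g : α → β} {a b : α} (hab : a ≤ b)
    (hf : ContinuousOn f (Icc a b)) (hg : ContinuousOn g (Icc a b))
    (ha : g a < f a) (hb : f b ≤ g b) : ∃ x ∈ Ioc a b, f x = g x := by
  obtain ⟨x, hx, hfgx⟩ := isPreconnected_Icc.intermediate_value₂ (right_mem_Icc.mpr hab)
    (left_mem_Icc.mpr hab) hf hg hb ha.le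
  have hax : a ≠ x := by
    rintro rfl
    exact ha.ne' hfgx
  exact ⟨x, ⟨hx.1.lt_of_ne hax, hx.2⟩, hfgx⟩

theorem neg_sq_le_tangent (s x : ℝ) : -x ^ 2 ≤ s ^ 2 - 2 * s * x := by
  linarith [two_mul_le_add_sq s x]

theorem concaveOn_const_sub_mul {S : Set ℝ} (hS : Convex ℝ S) (c m : ℝ) :
    ConcaveOn ℝ S fun x ↦ c - m * x :=
  (concaveOn_const c hS).sub ((LinearMap.mulLeft ℝ m).convexOn hS)

theorem le_neg_sq_of_convexOn {ρ : ℝ → ℝ} {s b : ℝ} (hρ : ConvexOn ℝ (Icc 0 b) ρ)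
    (hs : 0 ≤ s) (hsb : s ≤ b) (h0 : ρ 0 ≤ s ^ 2) (hb : ρ b ≤ -b ^ 2) : ρ s ≤ -s ^ 2 := by
  have hb0 : 0 ≤ b := hs.trans hsb
  have hs_mem : s ∈ segment ℝ 0 b := by
    rw [segment_eq_Icc hb0]
    exact ⟨hs, hsb⟩
  have h_line : ρ s ≤ s ^ 2 - 2 * s * s :=
    le_of_mem_segment_of_convexOn_of_concaveOn hρ (concaveOn_const_sub_mul hρ.1 (s ^ 2) (2 * s))
      (left_mem_Icc.mpr hb0) (right_mem_Icc.mpr hb0) (by simpa only [mul_zero, sub_zero] using h0)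
      (hb.trans (neg_sq_le_tangent s b)) hs_mem
  linarith

theorem stmt2_general {ρ : ℝ → ℝ} {b : ℝ} (hconv : ConvexOn ℝ (Icc 0 b) ρ)
    (hcont : ContinuousOn ρ (Icc 0 b)) (h0 : 0 < ρ 0) (hb0 : 0 ≤ b) (hb : ρ b ≤ -b ^ 2) :
    ∃ x ∈ Ioc 0 √(ρ 0), ρ x = -x ^ 2 := by
  obtain ⟨c, hc, hρc⟩ : ∃ c ∈ Icc 0 (min b √(ρ 0)), ρ c ≤ -c ^ 2 := by
    rcases le_total b √(ρ 0) with hle | hle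
    · exact ⟨b, ⟨hb0, le_min le_rfl hle⟩, hb⟩
    · exact ⟨√(ρ 0), ⟨sqrt_nonneg _, le_min hle le_rfl⟩,
        le_neg_sq_of_convexOn hconv (sqrt_nonneg _) hle (sq_sqrt h0.le).ge hb⟩
  obtain ⟨hcb, hcs⟩ := le_min_iff.mp hc.2
  obtain ⟨x, hx, hρx⟩ := exists_mem_Ioc_eq_of_lt_of_le hc.1
    (hcont.mono (Icc_subset_Icc_right hcb)) (g := fun x ↦ -x ^ 2) (by fun_prop)
    (by simpa using h0) hρc
  exact ⟨x, Ioc_subset_Ioc_right hcs hx, hρx⟩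

/-- If `a > 0`, `ρ : ℝ → ℝ` is convex with `ρ 0 = a`, and
`ρ λ₂ = −λ₂²` for some `λ₂ > 0`, then `ρ λ₁ = −λ₁²` for some `λ₁ ∈ (0, √a]`. -/
theorem stmt2 (a : ℝ) (ha : 0 < a) (ρ : ℝ → ℝ)
    (hconv : ConvexOn ℝ Set.univ ρ) (h0 : ρ 0 = a)
    (hex : ∃ l₂ : ℝ, 0 < l₂ ∧ ρ l₂ = -l₂ ^ 2) :
    ∃ l₁ : ℝ, 0 < l₁ ∧ l₁ ≤ Real.sqrt a ∧ ρ l₁ = -l₁ ^ 2 := by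
  obtain ⟨l₂, hl₂, hρl₂⟩ := hex
  simpa only [mem_Ioc, and_assoc, h0] using
    stmt2_general (hconv.subset (subset_univ _) (convex_Icc 0 l₂))
      ((hconv.continuousOn isOpen_univ).mono (subset_univ _)) (h0 ▸ ha) hl₂.le hρl₂.le
end

section
/- (Small-amplitude quadratic enhancement, deterministic case.) Let b : [0,L] → ℝ be continuous with ∫₀ᴸ b(y) dy = 0, and set k := (1/L)∫₀ᴸ ( ∫₀ˣ b(s) ds )² dx. Then there exist constants C > 0 and δ₀ > 0 such that for all δ ∈ (0, δ₀): | c*(δ·b) − c₀ − (c₀ δ²/2)·k | ≤ C δ³. In other words, c*(δ b) = c₀ + (c₀ δ²/2)(1/L)∫₀ᴸ χ'(x)² dx + O(δ³), where χ solves χ'' = −b with χ'(0) = χ'(L) = 0. -/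
open Real Set MeasureTheory intervalIntegral

/-- The principal Neumann eigenvalue `μ_b(λ)` of
`ψ'' + (λ² + λ b(y) + a) ψ = μ ψ` on `(0, L)`, defined through the Rayleigh
quotient variational characterization
`μ_b(λ) = sup { ∫₀ᴸ (−ψ'² + (λ² + λ b + a) ψ²) / ∫₀ᴸ ψ² : ψ ∈ H¹((0,L)), ψ ≠ 0 }`. -/
noncomputable def mu (L a : ℝ) (b : ℝ → ℝ) (l : ℝ) : ℝ :=
  sSup { m : ℝ | ∃ ψ : ℝ → ℝ, ContDiffOn ℝ 1 ψ (Icc 0 L) ∧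
    (∃ y ∈ Icc (0 : ℝ) L, ψ y ≠ 0) ∧
    m = (∫ y in (0 : ℝ)..L, (-(deriv ψ y) ^ 2 + (l ^ 2 + l * b y + a) * (ψ y) ^ 2)) /
        (∫ y in (0 : ℝ)..L, (ψ y) ^ 2) }

/-- The KPP minimal front speed `c*(b) = inf_{λ>0} μ_b(λ)/λ`. -/
noncomputable def cstar (L a : ℝ) (b : ℝ → ℝ) : ℝ :=
  sInf { v : ℝ | ∃ l : ℝ, 0 < l ∧ v = mu L a b l / l }

/-! If `w` vanishes at `0` and `L`, integrating `(w ψ²)'` over `[0, L]` gives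
`∫ (-ψ'² + V ψ²) = ∫ ((w² + V - w') ψ² - (ψ' + w ψ)²)`, so the principal eigenvalue of `V` lies
between the minimum and the maximum of `w² + V - w'`; for the lower bound test with
`ψ = exp (-∫ w)`, which kills the square. For `V = c + ε b` we solve the Riccati equation
`w' = w² + V - μ` to second order in `ε`: with `B = ∫ b`, `k` the mean of `B²` and `W' = B² - k`,
the choice `w = ε B + ε² W` gives `w² + V - w' = c + ε² k + O(ε³)`. Taking `c = λ² + a` and
`ε = λ δ`, the front speed is the infimum over `λ > 0` of `λ (1 + δ² k) + a / λ`, up to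
`O(λ² |δ|³)`. This remainder is harmless for bounded `λ` and `δ`; otherwise `μ(λ) ≥ λ² + a`, which
is the lower bound given by `w = ε B`, is enough.
-/

section Antiderivative

/-- The antiderivative of `f` vanishing at `0`. For the velocity `b` it is `-χ'`, where `χ` is the
corrector. -/
noncomputable def antideriv (f : ℝ → ℝ) (x : ℝ) : ℝ :=
  ∫ s in (0 : ℝ)..x, f s

variable {L : ℝ} {f : ℝ → ℝ}

lemma antideriv_zero (f : ℝ → ℝ) : antideriv f 0 = 0 :=
  integral_same

lemma hasDerivWithinAt_antideriv (hf : ContinuousOn f (Icc 0 L)) {x : ℝ} (hx : x ∈ Icc 0 L) :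
    HasDerivWithinAt (antideriv f) (f x) (Icc 0 L) x := by
  have : Fact (x ∈ Icc 0 L) := ⟨hx⟩
  exact integral_hasDerivWithinAt_right
    ((hf.mono (Icc_subset_Icc_right hx.2)).intervalIntegrable_of_Icc hx.1)
    (hf.stronglyMeasurableAtFilter_nhdsWithin measurableSet_Icc x) (hf x hx)

lemma continuousOn_antideriv (hf : ContinuousOn f (Icc 0 L)) :
    ContinuousOn (antideriv f) (Icc 0 L) :=
  fun _ hx => (hasDerivWithinAt_antideriv hf hx).continuousWithinAt

end Antiderivative

section PrincipalEigenvalue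

/-- The test functions admitted in `mu`: `C¹` on `[0, L]` and not identically zero there. -/
def testFunctions (L : ℝ) : Set (ℝ → ℝ) :=
  {ψ | ContDiffOn ℝ 1 ψ (Icc 0 L) ∧ ∃ y ∈ Icc (0 : ℝ) L, ψ y ≠ 0}

/-- The Rayleigh quotient of the Neumann operator `ψ ↦ ψ'' + V ψ` on `[0, L]`. -/
noncomputable def rayleigh (L : ℝ) (V ψ : ℝ → ℝ) : ℝ :=
  (∫ y in (0 : ℝ)..L, (-(deriv ψ y) ^ 2 + V y * (ψ y) ^ 2)) / ∫ y in (0 : ℝ)..L, (ψ y) ^ 2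

/-- The principal eigenvalue of the Neumann operator `ψ ↦ ψ'' + V ψ` on `[0, L]`, by its
variational characterization; `mu` is the case `V = λ² + λ b + a`. -/
noncomputable def principalEigenvalue (L : ℝ) (V : ℝ → ℝ) : ℝ :=
  sSup (rayleigh L V '' testFunctions L)

lemma mu_eq_principalEigenvalue (L a : ℝ) (b : ℝ → ℝ) (l : ℝ) :
    mu L a b l = principalEigenvalue L fun y => l ^ 2 + l * b y + a := by
  simp only [mu, principalEigenvalue, rayleigh, testFunctions, image, mem_ofPred_eq, and_assoc,
    eq_comm]

variable {L : ℝ} {V ψ φ : ℝ → ℝ}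

lemma integral_sq_pos_of_mem_testFunctions (hL : 0 < L) (hψ : ψ ∈ testFunctions L) :
    0 < ∫ y in (0 : ℝ)..L, (ψ y) ^ 2 := by
  obtain ⟨hψC, y, hy, hψy⟩ := hψ
  exact integral_pos hL (hψC.continuousOn.pow 2) (fun _ _ => sq_nonneg _)
    ⟨y, hy, sq_pos_of_ne_zero hψy⟩

lemma rayleigh_eq_of_hasDerivWithinAt (hL : 0 ≤ L)
    (hψ : ∀ x ∈ Icc 0 L, HasDerivWithinAt ψ (φ x) (Icc 0 L) x) :
    rayleigh L V ψ =
      (∫ y in (0 : ℝ)..L, (-(φ y) ^ 2 + V y * (ψ y) ^ 2)) / ∫ y in (0 : ℝ)..L, (ψ y) ^ 2 := by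
  unfold rayleigh
  congr 1
  refine integral_congr_Ioo_of_le hL fun x hx => ?_
  have hψx : HasDerivAt ψ (φ x) x :=
    (hψ x (Ioo_subset_Icc_self hx)).hasDerivAt (Icc_mem_nhds hx.1 hx.2)
  simp only [hψx.deriv]

end PrincipalEigenvalue

/-- A trial solution `w`, with derivative `w'`, of the Riccati equation `w' = w² + V - μ` satisfied
by `w = -ψ' / ψ` for an eigenfunction `ψ` of `ψ'' + V ψ = μ ψ`. The equation is not imposed; the
endpoint conditions express the Neumann conditions on `ψ`. -/
structure IsRiccatiTrial (L : ℝ) (w w' : ℝ → ℝ) : Prop where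
  hasDerivWithinAt : ∀ x ∈ Icc 0 L, HasDerivWithinAt w (w' x) (Icc 0 L) x
  continuousOn_deriv : ContinuousOn w' (Icc 0 L)
  map_zero : w 0 = 0
  map_right : w L = 0

namespace IsRiccatiTrial

variable {L : ℝ} {f V ψ φ w w' v v' : ℝ → ℝ}

protected lemma zero (L : ℝ) : IsRiccatiTrial L (fun _ => 0) (fun _ => 0) :=
  ⟨fun x _ => hasDerivWithinAt_const x _ 0, continuousOn_const, rfl, rfl⟩

protected lemma antideriv (hf : ContinuousOn f (Icc 0 L)) (hmean : ∫ y in (0 : ℝ)..L, f y = 0) :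
    IsRiccatiTrial L (antideriv f) f :=
  ⟨fun _ hx => hasDerivWithinAt_antideriv hf hx, hf, antideriv_zero f, hmean⟩

protected lemma add (hw : IsRiccatiTrial L w w') (hv : IsRiccatiTrial L v v') :
    IsRiccatiTrial L (fun x => w x + v x) (fun x => w' x + v' x) where
  hasDerivWithinAt x hx := (hw.hasDerivWithinAt x hx).add (hv.hasDerivWithinAt x hx)
  continuousOn_deriv := hw.continuousOn_deriv.add hv.continuousOn_deriv
  map_zero := by rw [hw.map_zero, hv.map_zero, add_zero]
  map_right := by rw [hw.map_right, hv.map_right, add_zero]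

protected lemma const_mul (hw : IsRiccatiTrial L w w') (c : ℝ) :
    IsRiccatiTrial L (fun x => c * w x) (fun x => c * w' x) where
  hasDerivWithinAt x hx := (hw.hasDerivWithinAt x hx).const_mul c
  continuousOn_deriv := hw.continuousOn_deriv.const_mul c
  map_zero := by rw [hw.map_zero, mul_zero]
  map_right := by rw [hw.map_right, mul_zero]

protected lemma continuousOn (hw : IsRiccatiTrial L w w') : ContinuousOn w (Icc 0 L) :=
  fun x hx => (hw.hasDerivWithinAt x hx).continuousWithinAt

lemma integral_energy_eq (hw : IsRiccatiTrial L w w') (hL : 0 ≤ L) (hV : ContinuousOn V (Icc 0 L))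
    (hψ : ∀ x ∈ Icc 0 L, HasDerivWithinAt ψ (φ x) (Icc 0 L) x) (hφ : ContinuousOn φ (Icc 0 L)) :
    ∫ y in (0 : ℝ)..L, (-(φ y) ^ 2 + V y * (ψ y) ^ 2) =
      ∫ y in (0 : ℝ)..L,
        ((w y ^ 2 + V y - w' y) * ψ y ^ 2 - (φ y + w y * ψ y) ^ 2) := by
  have hwc := hw.continuousOn
  have hw'c := hw.continuousOn_deriv
  have hψc : ContinuousOn ψ (Icc 0 L) := fun x hx => (hψ x hx).continuousWithinAt
  have hderiv : ∀ x ∈ Icc 0 L, HasDerivWithinAt (fun y => w y * ψ y ^ 2)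
      (w' x * ψ x ^ 2 + w x * (2 * ψ x * φ x)) (Icc 0 L) x := fun x hx => by
    simpa using (hw.hasDerivWithinAt x hx).fun_mul ((hψ x hx).fun_pow 2)
  have hzero : ∫ y in (0 : ℝ)..L, (w' y * ψ y ^ 2 + w y * (2 * ψ y * φ y)) = 0 := by
    rw [integral_eq_sub_of_hasDerivAt_of_le hL
      (fun x hx => (hderiv x hx).continuousWithinAt)
      (fun x hx => (hderiv x (Ioo_subset_Icc_self hx)).hasDerivAt (Icc_mem_nhds hx.1 hx.2))
      (ContinuousOn.intervalIntegrable_of_Icc hL (by fun_prop)), hw.map_zero, hw.map_right]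
    ring
  rw [← sub_eq_zero, ← intervalIntegral.integral_sub
    (ContinuousOn.intervalIntegrable_of_Icc hL (by fun_prop))
    (ContinuousOn.intervalIntegrable_of_Icc hL (by fun_prop)), ← hzero]
  congr 1 with y
  ring

lemma rayleigh_le (hw : IsRiccatiTrial L w w') (hL : 0 < L) (hV : ContinuousOn V (Icc 0 L)) {K : ℝ}
    (hK : ∀ x ∈ Icc 0 L, w x ^ 2 + V x - w' x ≤ K) (hψ : ψ ∈ testFunctions L) :
    rayleigh L V ψ ≤ K := by
  obtain ⟨hψd, hφ⟩ := (contDiffOn_one_iff_derivWithin (uniqueDiffOn_Icc hL)).1 hψ.1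
  have hψd' := fun x hx => (hψd x hx).hasDerivWithinAt
  have hwc := hw.continuousOn
  have hw'c := hw.continuousOn_deriv
  have hψc := hψ.1.continuousOn
  rw [rayleigh_eq_of_hasDerivWithinAt hL.le hψd', hw.integral_energy_eq hL.le hV hψd' hφ,
    div_le_iff₀ (integral_sq_pos_of_mem_testFunctions hL hψ), ← intervalIntegral.integral_const_mul]
  refine integral_mono_on hL.le (ContinuousOn.intervalIntegrable_of_Icc hL.le (by fun_prop))
    (ContinuousOn.intervalIntegrable_of_Icc hL.le (by fun_prop)) fun x hx => ?_
  calc (w x ^ 2 + V x - w' x) * ψ x ^ 2 - (derivWithin ψ (Icc 0 L) x + w x * ψ x) ^ 2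
      ≤ (w x ^ 2 + V x - w' x) * ψ x ^ 2 := sub_le_self _ (sq_nonneg _)
    _ ≤ K * ψ x ^ 2 := mul_le_mul_of_nonneg_right (hK x hx) (sq_nonneg _)

lemma exists_le_rayleigh (hw : IsRiccatiTrial L w w') (hL : 0 < L) (hV : ContinuousOn V (Icc 0 L))
    {K : ℝ} (hK : ∀ x ∈ Icc 0 L, K ≤ w x ^ 2 + V x - w' x) :
    ∃ ψ ∈ testFunctions L, K ≤ rayleigh L V ψ := by
  have hwc := hw.continuousOn
  have hw'c := hw.continuousOn_deriv
  let ψ : ℝ → ℝ := fun x => exp (-antideriv w x)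
  have hψd : ∀ x ∈ Icc 0 L, HasDerivWithinAt ψ (-(w x * ψ x)) (Icc 0 L) x := fun x hx => by
    simpa [ψ, mul_comm] using (hasDerivWithinAt_antideriv hwc hx).fun_neg.exp
  have hψc : ContinuousOn ψ (Icc 0 L) := fun x hx => (hψd x hx).continuousWithinAt
  have hψ : ψ ∈ testFunctions L := by
    refine ⟨(contDiffOn_one_iff_derivWithin (uniqueDiffOn_Icc hL)).2
      ⟨fun x hx => (hψd x hx).differentiableWithinAt, ?_⟩, 0, left_mem_Icc.2 hL.le, exp_ne_zero _⟩
    exact (hwc.mul hψc).neg.congr fun x hx => (hψd x hx).derivWithin (uniqueDiffOn_Icc hL x hx)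
  refine ⟨ψ, hψ, ?_⟩
  rw [rayleigh_eq_of_hasDerivWithinAt hL.le hψd,
    hw.integral_energy_eq hL.le hV hψd (by fun_prop),
    le_div_iff₀ (integral_sq_pos_of_mem_testFunctions hL hψ), ← intervalIntegral.integral_const_mul]
  refine integral_mono_on hL.le (ContinuousOn.intervalIntegrable_of_Icc hL.le (by fun_prop))
    (ContinuousOn.intervalIntegrable_of_Icc hL.le (by fun_prop)) fun x hx => ?_
  calc K * ψ x ^ 2 ≤ (w x ^ 2 + V x - w' x) * ψ x ^ 2 :=
        mul_le_mul_of_nonneg_right (hK x hx) (sq_nonneg _)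
    _ = (w x ^ 2 + V x - w' x) * ψ x ^ 2 - (-(w x * ψ x) + w x * ψ x) ^ 2 := by ring

lemma principalEigenvalue_le (hw : IsRiccatiTrial L w w') (hL : 0 < L)
    (hV : ContinuousOn V (Icc 0 L)) {K : ℝ} (hK : ∀ x ∈ Icc 0 L, w x ^ 2 + V x - w' x ≤ K) :
    principalEigenvalue L V ≤ K := by
  have hne : (testFunctions L).Nonempty :=
    ⟨fun _ => 1, contDiffOn_const, 0, left_mem_Icc.2 hL.le, one_ne_zero⟩
  exact csSup_le (hne.image _) (forall_mem_image.2 fun _ => hw.rayleigh_le hL hV hK)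

lemma le_principalEigenvalue (hw : IsRiccatiTrial L w w') (hL : 0 < L)
    (hV : ContinuousOn V (Icc 0 L)) {K : ℝ} (hK : ∀ x ∈ Icc 0 L, K ≤ w x ^ 2 + V x - w' x) :
    K ≤ principalEigenvalue L V := by
  obtain ⟨M, hM⟩ := isCompact_Icc.bddAbove_image hV
  have hbdd : BddAbove (rayleigh L V '' testFunctions L) :=
    ⟨M, forall_mem_image.2 fun _ => (IsRiccatiTrial.zero L).rayleigh_le hL hV fun x hx => by
      simpa using hM (mem_image_of_mem V hx)⟩
  obtain ⟨ψ, hψ, hKψ⟩ := hw.exists_le_rayleigh hL hV hK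
  exact hKψ.trans (le_csSup hbdd (mem_image_of_mem _ hψ))

lemma abs_principalEigenvalue_sub_le (hw : IsRiccatiTrial L w w') (hL : 0 < L)
    (hV : ContinuousOn V (Icc 0 L)) {m r : ℝ}
    (h : ∀ x ∈ Icc 0 L, |w x ^ 2 + V x - w' x - m| ≤ r) :
    |principalEigenvalue L V - m| ≤ r := by
  rw [abs_sub_le_iff, sub_le_iff_le_add', sub_le_comm]
  exact ⟨hw.principalEigenvalue_le hL hV fun x hx =>
      sub_le_iff_le_add'.1 (abs_sub_le_iff.1 (h x hx)).1,
    hw.le_principalEigenvalue hL hV fun x hx => sub_le_comm.1 (abs_sub_le_iff.1 (h x hx)).2⟩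

end IsRiccatiTrial

section Perturbation

/-- The mean of `χ'²` over `[0, L]`, where `χ` is the corrector of the velocity `b`; this is the
coefficient `k` of the quadratic enhancement. -/
noncomputable def correctorEnergy (L : ℝ) (b : ℝ → ℝ) : ℝ :=
  (1 / L) * ∫ x in (0 : ℝ)..L, antideriv b x ^ 2

variable {L : ℝ} {b : ℝ → ℝ}

lemma correctorEnergy_nonneg (hL : 0 ≤ L) (b : ℝ → ℝ) : 0 ≤ correctorEnergy L b :=
  mul_nonneg (one_div_nonneg.2 hL) (integral_nonneg hL fun _ _ => sq_nonneg _)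

lemma integral_antideriv_sq_sub_correctorEnergy (hL : 0 < L) (hb : ContinuousOn b (Icc 0 L)) :
    ∫ x in (0 : ℝ)..L, (antideriv b x ^ 2 - correctorEnergy L b) = 0 := by
  have hB := continuousOn_antideriv hb
  rw [intervalIntegral.integral_sub
    (ContinuousOn.intervalIntegrable_of_Icc hL.le (by fun_prop)) intervalIntegrable_const,
    intervalIntegral.integral_const, correctorEnergy, smul_eq_mul]
  field_simp
  ring

lemma le_principalEigenvalue_const_add_mul (hL : 0 < L) (hb : ContinuousOn b (Icc 0 L))
    (hmean : ∫ y in (0 : ℝ)..L, b y = 0) (c ε : ℝ) :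
    c ≤ principalEigenvalue L fun y => c + ε * b y := by
  refine ((IsRiccatiTrial.antideriv hb hmean).const_mul ε).le_principalEigenvalue hL
    (by fun_prop) fun x _ => ?_
  calc c ≤ c + (ε * antideriv b x) ^ 2 := le_add_of_nonneg_right (sq_nonneg _)
    _ = (ε * antideriv b x) ^ 2 + (c + ε * b x) - ε * b x := by ring

lemma exists_abs_principalEigenvalue_sub_le_of_abs_le_one (hL : 0 < L)
    (hb : ContinuousOn b (Icc 0 L)) (hmean : ∫ y in (0 : ℝ)..L, b y = 0) :
    ∃ C, ∀ c ε : ℝ, |ε| ≤ 1 →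
      |principalEigenvalue L (fun y => c + ε * b y) - (c + ε ^ 2 * correctorEnergy L b)| ≤
        C * |ε| ^ 3 := by
  set k := correctorEnergy L b
  let B := antideriv b
  let W := antideriv fun x => B x ^ 2 - k
  have hBc : ContinuousOn B (Icc 0 L) := continuousOn_antideriv hb
  have hB : IsRiccatiTrial L B b := .antideriv hb hmean
  have hW : IsRiccatiTrial L W fun x => B x ^ 2 - k :=
    .antideriv (by fun_prop) (integral_antideriv_sq_sub_correctorEnergy hL hb)
  have hWc := hW.continuousOn
  obtain ⟨M₃, hM₃⟩ := isCompact_Icc.exists_bound_of_continuousOn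
    (f := fun x => 2 * B x * W x) (s := Icc 0 L) (by fun_prop)
  obtain ⟨M₄, hM₄⟩ := isCompact_Icc.exists_bound_of_continuousOn
    (f := fun x => W x ^ 2) (s := Icc 0 L) (by fun_prop)
  refine ⟨M₃ + M₄, fun c ε hε => ((hB.const_mul ε).add
    (hW.const_mul (ε ^ 2))).abs_principalEigenvalue_sub_le hL (by fun_prop) fun x hx => ?_⟩
  calc |(ε * B x + ε ^ 2 * W x) ^ 2 + (c + ε * b x) - (ε * b x + ε ^ 2 * (B x ^ 2 - k)) -
        (c + ε ^ 2 * k)|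
      = |2 * B x * W x * ε ^ 3 + W x ^ 2 * ε ^ 4| := by ring_nf
    _ ≤ |2 * B x * W x| * |ε| ^ 3 + |W x ^ 2| * |ε| ^ 4 := by
        rw [← abs_pow ε, ← abs_pow ε, ← abs_mul, ← abs_mul]
        exact abs_add_le _ _
    _ ≤ M₃ * |ε| ^ 3 + M₄ * |ε| ^ 3 := add_le_add
        (mul_le_mul_of_nonneg_right (hM₃ x hx) (by positivity))
        (mul_le_mul (hM₄ x hx) (pow_le_pow_of_le_one (abs_nonneg ε) hε (by norm_num))
          (by positivity) ((norm_nonneg _).trans (hM₄ x hx)))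
    _ = (M₃ + M₄) * |ε| ^ 3 := by ring

lemma exists_abs_principalEigenvalue_sub_le_of_one_le_abs (hL : 0 < L)
    (hb : ContinuousOn b (Icc 0 L)) :
    ∃ C, ∀ c ε : ℝ, 1 ≤ |ε| →
      |principalEigenvalue L (fun y => c + ε * b y) - (c + ε ^ 2 * correctorEnergy L b)| ≤
        C * |ε| ^ 3 := by
  set k := correctorEnergy L b
  have hk : 0 ≤ k := correctorEnergy_nonneg hL.le b
  obtain ⟨M, hM⟩ := isCompact_Icc.exists_bound_of_continuousOn hb
  refine ⟨M + k, fun c ε hε => (IsRiccatiTrial.zero L).abs_principalEigenvalue_sub_le hL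
    (by fun_prop) fun x hx => ?_⟩
  calc |0 ^ 2 + (c + ε * b x) - 0 - (c + ε ^ 2 * k)| = |b x * ε - k * ε ^ 2| := by ring_nf
    _ ≤ |b x| * |ε| + k * |ε| ^ 2 := by
        rw [← abs_mul, ← abs_of_nonneg hk, ← abs_pow, ← abs_mul, abs_of_nonneg hk]
        exact abs_sub _ _
    _ ≤ M * |ε| ^ 3 + k * |ε| ^ 3 := add_le_add
        (mul_le_mul (hM x hx) (le_self_pow₀ hε (by norm_num)) (abs_nonneg ε)
          ((norm_nonneg _).trans (hM x hx)))
        (mul_le_mul_of_nonneg_left (pow_le_pow_right₀ hε (by norm_num)) hk)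
    _ = (M + k) * |ε| ^ 3 := by ring

lemma exists_abs_principalEigenvalue_sub_le (hL : 0 < L) (hb : ContinuousOn b (Icc 0 L))
    (hmean : ∫ y in (0 : ℝ)..L, b y = 0) :
    ∃ C > 0, ∀ c ε : ℝ,
      |principalEigenvalue L (fun y => c + ε * b y) - (c + ε ^ 2 * correctorEnergy L b)| ≤
        C * |ε| ^ 3 := by
  obtain ⟨C₁, hC₁⟩ := exists_abs_principalEigenvalue_sub_le_of_abs_le_one hL hb hmean
  obtain ⟨C₂, hC₂⟩ := exists_abs_principalEigenvalue_sub_le_of_one_le_abs hL hb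
  refine ⟨max (max C₁ C₂) 1, lt_max_of_lt_right one_pos, fun c ε => ?_⟩
  rcases le_total |ε| 1 with hε | hε
  · refine (hC₁ c ε hε).trans (mul_le_mul_of_nonneg_right ?_ (by positivity))
    exact le_max_of_le_left (le_max_left _ _)
  · refine (hC₂ c ε hε).trans (mul_le_mul_of_nonneg_right ?_ (by positivity))
    exact le_max_of_le_left (le_max_right _ _)

end Perturbation

section Minimization

variable {s k C R δ l m : ℝ}

lemma two_mul_add_mul_sub_le_div (hl : 0 < l) (s κ : ℝ) :
    2 * s + s * κ - l * κ ^ 2 / 4 ≤ (l ^ 2 + s ^ 2 + l ^ 2 * κ) / l := by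
  rw [le_div_iff₀ hl]
  linarith [sq_nonneg (l - s + l * κ / 2)]

lemma two_mul_add_mul_sub_le_div_of_abs_sub_le_of_le (hC : 0 ≤ C) (hδ : |δ| ≤ 1) (hl : 0 < l)
    (hlR : l ≤ R) (hm : |m - (l ^ 2 + s ^ 2 + (l * δ) ^ 2 * k)| ≤ C * |l * δ| ^ 3) :
    2 * s + s * (k * δ ^ 2) - (R * k ^ 2 / 4 + C * R ^ 2) * |δ| ^ 3 ≤ m / l := by
  have hR : 0 ≤ R := hl.le.trans hlR
  have hδ4 : δ ^ 4 ≤ |δ| ^ 3 := by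
    rw [← Even.pow_abs (by decide)]
    exact pow_le_pow_of_le_one (abs_nonneg δ) hδ (by norm_num)
  have hquartic : l * (k * δ ^ 2) ^ 2 / 4 ≤ R * k ^ 2 / 4 * |δ| ^ 3 := by
    calc l * (k * δ ^ 2) ^ 2 / 4 = l * k ^ 2 / 4 * δ ^ 4 := by ring
      _ ≤ R * k ^ 2 / 4 * |δ| ^ 3 := by gcongr
  have hcubic : C * l ^ 2 * |δ| ^ 3 ≤ C * R ^ 2 * |δ| ^ 3 := by gcongr
  calc 2 * s + s * (k * δ ^ 2) - (R * k ^ 2 / 4 + C * R ^ 2) * |δ| ^ 3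
      ≤ 2 * s + s * (k * δ ^ 2) - l * (k * δ ^ 2) ^ 2 / 4 - C * l ^ 2 * |δ| ^ 3 := by linarith
    _ ≤ (l ^ 2 + s ^ 2 + l ^ 2 * (k * δ ^ 2)) / l - C * l ^ 2 * |δ| ^ 3 :=
        sub_le_sub_right (two_mul_add_mul_sub_le_div hl s _) _
    _ = (l ^ 2 + s ^ 2 + (l * δ) ^ 2 * k - C * |l * δ| ^ 3) / l := by
        rw [abs_mul, abs_of_pos hl]
        field_simp
    _ ≤ m / l := by
        gcongr
        exact sub_le_comm.1 (abs_sub_le_iff.1 hm).2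

lemma two_mul_add_mul_sub_le_div_of_sq_add_sq_le (hs : 0 ≤ s) (hk : 0 ≤ k) (hl : 0 < l)
    (hδl : 1 ≤ |δ| ∨ (2 + k) * s ≤ l) (hm : l ^ 2 + s ^ 2 ≤ m) :
    2 * s + s * (k * δ ^ 2) - s * k * |δ| ^ 3 ≤ m / l := by
  refine le_trans ?_ (div_le_div_of_nonneg_right hm hl.le)
  have hsk : 0 ≤ s * k := mul_nonneg hs hk
  have hsk' : 0 ≤ s * k * |δ| ^ 3 := by positivity
  have hsq : s * (k * δ ^ 2) = s * k * |δ| ^ 2 := by rw [sq_abs, mul_assoc]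
  have h_two_mul : 2 * s ≤ (l ^ 2 + s ^ 2) / l := by
    rw [le_div_iff₀ hl]
    linarith [sq_nonneg (l - s)]
  have h_self : l ≤ (l ^ 2 + s ^ 2) / l := by
    rw [le_div_iff₀ hl]
    linarith [sq_nonneg s]
  rcases le_total 1 |δ| with hδ | hδ
  · have hδ2 : s * k * |δ| ^ 2 ≤ s * k * |δ| ^ 3 :=
      mul_le_mul_of_nonneg_left (pow_le_pow_right₀ hδ (by norm_num)) hsk
    linarith
  · have hδ2 : s * k * |δ| ^ 2 ≤ s * k :=
      mul_le_of_le_one_right hsk (pow_le_one₀ (abs_nonneg δ) hδ)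
    rcases hδl with hδ1 | hsl
    · rw [hsq, le_antisymm hδ hδ1]
      linarith
    · linarith

lemma two_mul_add_mul_sub_le_div_of_abs_sub_le (hs : 0 ≤ s) (hk : 0 ≤ k) (hC : 0 ≤ C) (hl : 0 < l)
    (hR : (2 + k) * s ≤ R) (hlow : l ^ 2 + s ^ 2 ≤ m)
    (hm : |m - (l ^ 2 + s ^ 2 + (l * δ) ^ 2 * k)| ≤ C * |l * δ| ^ 3) :
    2 * s + s * (k * δ ^ 2) - (s * k + (R * k ^ 2 / 4 + C * R ^ 2)) * |δ| ^ 3 ≤ m / l := by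
  have hR0 : 0 ≤ R := le_trans (by positivity) hR
  have hsk : 0 ≤ s * k * |δ| ^ 3 := by positivity
  have hrest : 0 ≤ (R * k ^ 2 / 4 + C * R ^ 2) * |δ| ^ 3 := by positivity
  by_cases hδl : 1 ≤ |δ| ∨ R ≤ l
  · linarith [two_mul_add_mul_sub_le_div_of_sq_add_sq_le hs hk hl (hδl.imp_right hR.trans) hlow]
  · push Not at hδl
    linarith [two_mul_add_mul_sub_le_div_of_abs_sub_le_of_le hC hδl.1.le hl hδl.2.le hm]

lemma div_self_le_two_mul_add_mul_add_of_abs_sub_le (hs : 0 < s)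
    (hm : |m - (s ^ 2 + s ^ 2 + (s * δ) ^ 2 * k)| ≤ C * |s * δ| ^ 3) :
    m / s ≤ 2 * s + s * (k * δ ^ 2) + C * s ^ 2 * |δ| ^ 3 := by
  rw [div_le_iff₀ hs]
  calc m ≤ s ^ 2 + s ^ 2 + (s * δ) ^ 2 * k + C * |s * δ| ^ 3 :=
        sub_le_iff_le_add'.1 (abs_sub_le_iff.1 hm).1
    _ = (2 * s + s * (k * δ ^ 2) + C * s ^ 2 * |δ| ^ 3) * s := by
        rw [abs_mul, abs_of_pos hs]
        ring

lemma exists_abs_sInf_div_sub_le (hs : 0 < s) (hk : 0 ≤ k) (hC : 0 < C) :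
    ∃ D > 0, ∀ (δ : ℝ) (m : ℝ → ℝ), (∀ l > 0, l ^ 2 + s ^ 2 ≤ m l) →
      (∀ l > 0, |m l - (l ^ 2 + s ^ 2 + (l * δ) ^ 2 * k)| ≤ C * |l * δ| ^ 3) →
        |sInf {v | ∃ l, 0 < l ∧ v = m l / l} - (2 * s + s * (k * δ ^ 2))| ≤ D * |δ| ^ 3 := by
  let R := (2 + k) * s
  have hsR : s ≤ R := le_mul_of_one_le_left hs.le (by linarith)
  have : 0 < R := hs.trans_le hsR
  let D := s * k + (R * k ^ 2 / 4 + C * R ^ 2)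
  have hCD : C * s ^ 2 ≤ D := by
    have hCR : C * s ^ 2 ≤ C * R ^ 2 := by gcongr
    have hrest : 0 ≤ s * k + R * k ^ 2 / 4 := by positivity
    calc C * s ^ 2 ≤ s * k + R * k ^ 2 / 4 + C * R ^ 2 := by linarith
      _ = D := add_assoc _ _ _
  refine ⟨D, by positivity, fun δ m hlow hm => ?_⟩
  have hlower : ∀ v ∈ {v | ∃ l, 0 < l ∧ v = m l / l},
      2 * s + s * (k * δ ^ 2) - D * |δ| ^ 3 ≤ v := by
    rintro _ ⟨l, hl, rfl⟩
    exact two_mul_add_mul_sub_le_div_of_abs_sub_le hs.le hk hC.le hl le_rfl (hlow l hl) (hm l hl)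
  have hupper : m s / s ≤ 2 * s + s * (k * δ ^ 2) + D * |δ| ^ 3 :=
    (div_self_le_two_mul_add_mul_add_of_abs_sub_le hs (hm s hs)).trans (by gcongr)
  rw [abs_sub_le_iff, sub_le_iff_le_add', sub_le_comm]
  exact ⟨(csInf_le ⟨_, hlower⟩ ⟨s, hs, rfl⟩).trans hupper, le_csInf ⟨_, s, hs, rfl⟩ hlower⟩

end Minimization

theorem stmt5_general (L a : ℝ) (hL : 0 < L) (ha : 0 < a) (b : ℝ → ℝ)
    (hb : ContinuousOn b (Icc 0 L)) (hmean : (∫ y in (0 : ℝ)..L, b y) = 0) :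
    ∃ C > (0 : ℝ), ∀ δ : ℝ,
      |cstar L a (fun y => δ * b y) - 2 * Real.sqrt a -
          (2 * Real.sqrt a * δ ^ 2 / 2) *
            ((1 / L) * ∫ x in (0 : ℝ)..L, (∫ s in (0 : ℝ)..x, b s) ^ 2)| ≤ C * |δ| ^ 3 := by
  obtain ⟨C, hC, hμ⟩ := exists_abs_principalEigenvalue_sub_le hL hb hmean
  obtain ⟨D, hD, hc⟩ :=
    exists_abs_sInf_div_sub_le (Real.sqrt_pos.2 ha) (correctorEnergy_nonneg hL.le b) hC
  refine ⟨D, hD, fun δ => ?_⟩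
  have hmu : ∀ l, mu L a (fun y => δ * b y) l =
      principalEigenvalue L fun y => l ^ 2 + √a ^ 2 + l * δ * b y := fun l => by
    rw [mu_eq_principalEigenvalue, Real.sq_sqrt ha.le]
    ring_nf
  have hcstar := hc δ (mu L a fun y => δ * b y)
    (fun l _ => hmu l ▸ le_principalEigenvalue_const_add_mul hL hb hmean _ _)
    (fun l _ => hmu l ▸ hμ _ _)
  calc _ = |cstar L a (fun y => δ * b y) - (2 * √a + √a * (correctorEnergy L b * δ ^ 2))| := by
        simp only [correctorEnergy, antideriv]
        ring_nf
    _ ≤ D * |δ| ^ 3 := hcstar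

/-- small-amplitude quadratic enhancement, deterministic case:
for continuous mean-zero `b` on `[0,L]`, with
`k := (1/L) ∫₀ᴸ (∫₀ˣ b(s) ds)² dx` (which equals `(1/L)∫₀ᴸ χ'(x)² dx` for the
Neumann corrector `χ'' = −b`), one has
`|c*(δ b) − c₀ − (c₀ δ²/2) k| ≤ C δ³` for all small `δ > 0`, where `c₀ = 2√a`. -/
theorem stmt5 (L a : ℝ) (hL : 0 < L) (ha : 0 < a) (b : ℝ → ℝ)
    (hb : ContinuousOn b (Icc 0 L))
    (hmean : (∫ y in (0 : ℝ)..L, b y) = 0) :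
    ∃ C > (0 : ℝ), ∃ δ₀ > (0 : ℝ), ∀ δ : ℝ, 0 < δ → δ < δ₀ →
      |cstar L a (fun y => δ * b y) - 2 * Real.sqrt a -
          (2 * Real.sqrt a * δ ^ 2 / 2) *
            ((1 / L) * ∫ x in (0 : ℝ)..L, (∫ s in (0 : ℝ)..x, b s) ^ 2)| ≤ C * δ ^ 3 := by
  obtain ⟨C, hC, hbound⟩ := stmt5_general L a hL ha b hb hmean
  exact ⟨C, hC, 1, one_pos, fun δ hδ _ => by simpa only [abs_of_pos hδ] using hbound δ⟩
end

section
/- (A mean-zero shear always enhances the speed.) Let b : [0,L] → ℝ be continuous with ∫₀ᴸ b(y) dy = 0. Then c*(b) ≥ c₀, i.e. inf_{λ>0} μ_b(λ)/λ ≥ 2√a. -/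
open Real Set MeasureTheory intervalIntegral

/-! The constant test function gives `μ_b(λ) ≥ λ² + λ m + a`, where `m` is the mean of `b`.
Dividing by `λ`, the inequality of arithmetic and geometric means `λ + a / λ ≥ 2√a` yields
`c*(b) ≥ 2√a + m`. An upper bound for the potential bounds all Rayleigh quotients, so the
supremum defining `μ_b(λ)` is a genuine one and does dominate the quotient of the constant. -/

section NeumannEigenvalue

variable {α β M c : ℝ} {V ψ : ℝ → ℝ}

/-- The Rayleigh quotient at `ψ` of the Schrödinger operator `ψ ↦ ψ'' + V ψ` on `(α, β)` with
Neumann boundary conditions. -/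
noncomputable def rayleighQuotient (α β : ℝ) (V ψ : ℝ → ℝ) : ℝ :=
  (∫ y in α..β, (-(deriv ψ y) ^ 2 + V y * (ψ y) ^ 2)) / ∫ y in α..β, (ψ y) ^ 2

/-- The nonzero test functions of the Rayleigh quotient. As in `mu`, they are `C¹` up to the
boundary instead of `H¹`. -/
def neumannTestFunctions (α β : ℝ) : Set (ℝ → ℝ) :=
  {ψ | ContDiffOn ℝ 1 ψ (Icc α β) ∧ ∃ y ∈ Icc α β, ψ y ≠ 0}

/-- The principal Neumann eigenvalue of `ψ ↦ ψ'' + V ψ` on `(α, β)`, as the supremum of the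
Rayleigh quotients. -/
noncomputable def principalNeumannEigenvalue (α β : ℝ) (V : ℝ → ℝ) : ℝ :=
  sSup (rayleighQuotient α β V '' neumannTestFunctions α β)

theorem const_mem_neumannTestFunctions (hαβ : α ≤ β) (hc : c ≠ 0) :
    (fun _ => c) ∈ neumannTestFunctions α β :=
  ⟨contDiffOn_const, α, left_mem_Icc.2 hαβ, hc⟩

theorem rayleighQuotient_const (hc : c ≠ 0) :
    rayleighQuotient α β V (fun _ => c) = ⨍ y in α..β, V y := by
  have hnum : ∫ y in α..β, (-(deriv (fun _ => c) y) ^ 2 + V y * c ^ 2)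
      = (∫ y in α..β, V y) * c ^ 2 := by
    simp
  have hden : ∫ _ in α..β, c ^ 2 = (β - α) * c ^ 2 := by
    simp
  rw [rayleighQuotient, hnum, hden, mul_div_mul_right _ _ (pow_ne_zero 2 hc),
    interval_average_eq_div]

theorem intervalIntegrable_deriv_sq_of_contDiffOn_Icc (hαβ : α < β)
    (hψ : ContDiffOn ℝ 1 ψ (Icc α β)) :
    IntervalIntegrable (fun y => (deriv ψ y) ^ 2) volume α β := by
  have hcont : ContinuousOn (derivWithin ψ (Icc α β)) (Icc α β) :=
    hψ.continuousOn_derivWithin (uniqueDiffOn_Icc hαβ) le_rfl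
  refine ((hcont.pow 2).intervalIntegrable_of_Icc hαβ.le).congr_uIoo fun y hy => ?_
  rw [uIoo_of_le hαβ.le] at hy
  simp only [Pi.pow_apply, derivWithin_of_mem_nhds (Icc_mem_nhds hy.1 hy.2)]

theorem integral_sq_pos_of_mem_neumannTestFunctions (hαβ : α < β)
    (hψ : ψ ∈ neumannTestFunctions α β) : 0 < ∫ y in α..β, (ψ y) ^ 2 := by
  obtain ⟨hψ, y, hy, hψy⟩ := hψ
  exact integral_pos hαβ (hψ.continuousOn.pow 2) (fun _ _ => sq_nonneg _)
    ⟨y, hy, sq_pos_of_ne_zero hψy⟩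

theorem rayleighQuotient_le (hαβ : α < β) (hV : IntervalIntegrable V volume α β)
    (hVM : ∀ y ∈ Icc α β, V y ≤ M) (hψ : ψ ∈ neumannTestFunctions α β) :
    rayleighQuotient α β V ψ ≤ M := by
  rw [rayleighQuotient, div_le_iff₀ (integral_sq_pos_of_mem_neumannTestFunctions hαβ hψ),
    ← intervalIntegral.integral_const_mul]
  have hψsq : ContinuousOn (fun y => (ψ y) ^ 2) (Icc α β) := hψ.1.continuousOn.pow 2
  have hVψ : IntervalIntegrable (fun y => V y * (ψ y) ^ 2) volume α β :=
    hV.mul_continuousOn (by rwa [uIcc_of_le hαβ.le])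
  refine integral_mono_on hαβ.le
    ((intervalIntegrable_deriv_sq_of_contDiffOn_Icc hαβ hψ.1).neg.add hVψ)
    ((hψsq.intervalIntegrable_of_Icc hαβ.le).const_mul M) fun y hy => ?_
  calc -(deriv ψ y) ^ 2 + V y * (ψ y) ^ 2
      ≤ V y * (ψ y) ^ 2 := by linarith [sq_nonneg (deriv ψ y)]
    _ ≤ M * (ψ y) ^ 2 := by gcongr; exact hVM y hy

theorem bddAbove_rayleighQuotient (hαβ : α < β) (hV : IntervalIntegrable V volume α β)
    (hVbdd : BddAbove (V '' Icc α β)) :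
    BddAbove (rayleighQuotient α β V '' neumannTestFunctions α β) := by
  obtain ⟨M, hM⟩ := hVbdd
  exact ⟨M, forall_mem_image.2 fun _ hψ =>
    rayleighQuotient_le hαβ hV (forall_mem_image.1 hM) hψ⟩

theorem average_le_principalNeumannEigenvalue (hαβ : α < β) (hV : IntervalIntegrable V volume α β)
    (hVbdd : BddAbove (V '' Icc α β)) :
    ⨍ y in α..β, V y ≤ principalNeumannEigenvalue α β V := by
  rw [← rayleighQuotient_const one_ne_zero]
  exact le_csSup (bddAbove_rayleighQuotient hαβ hV hVbdd)
    (mem_image_of_mem _ (const_mem_neumannTestFunctions hαβ.le one_ne_zero))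

end NeumannEigenvalue

section FrontSpeed

variable {L a l : ℝ} {b : ℝ → ℝ}

theorem mu_eq_principalNeumannEigenvalue (L a : ℝ) (b : ℝ → ℝ) (l : ℝ) :
    mu L a b l = principalNeumannEigenvalue 0 L fun y => l ^ 2 + l * b y + a := by
  simp only [mu, principalNeumannEigenvalue, image, neumannTestFunctions, rayleighQuotient,
    mem_ofPred_eq, and_assoc, eq_comm]

theorem sq_add_mul_average_add_le_mu (hL : 0 < L) (hl : 0 ≤ l)
    (hb : IntervalIntegrable b volume 0 L) (hbdd : BddAbove (b '' Icc 0 L)) :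
    l ^ 2 + l * (⨍ y in (0 : ℝ)..L, b y) + a ≤ mu L a b l := by
  have hint : IntervalIntegrable (fun y => l ^ 2 + l * b y + a) volume 0 L :=
    (intervalIntegrable_const.add (hb.const_mul l)).add intervalIntegrable_const
  have hbddV : BddAbove ((fun y => l ^ 2 + l * b y + a) '' Icc 0 L) := by
    obtain ⟨M, hM⟩ := hbdd
    refine ⟨l ^ 2 + l * M + a, forall_mem_image.2 fun y hy => ?_⟩
    gcongr
    exact hM (mem_image_of_mem b hy)
  have havg : ⨍ y in (0 : ℝ)..L, (l ^ 2 + l * b y + a)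
      = l ^ 2 + l * (⨍ y in (0 : ℝ)..L, b y) + a := by
    simp only [interval_average_eq_div]
    rw [integral_add (intervalIntegrable_const.add (hb.const_mul l)) intervalIntegrable_const,
      integral_add intervalIntegrable_const (hb.const_mul l),
      intervalIntegral.integral_const_mul]
    simp only [intervalIntegral.integral_const, smul_eq_mul, sub_zero]
    field_simp
  rw [mu_eq_principalNeumannEigenvalue, ← havg]
  exact average_le_principalNeumannEigenvalue hL hint hbddV

theorem two_mul_sqrt_mul_le_sq_add (ha : 0 ≤ a) (l : ℝ) : 2 * √a * l ≤ l ^ 2 + a := by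
  linarith [two_mul_le_add_sq (√a) l, sq_sqrt ha]

end FrontSpeed

theorem stmt7_general (L a : ℝ) (hL : 0 < L) (ha : 0 ≤ a) (b : ℝ → ℝ)
    (hb : IntervalIntegrable b volume 0 L) (hbdd : BddAbove (b '' Icc 0 L)) :
    2 * √a + (⨍ y in (0 : ℝ)..L, b y) ≤ cstar L a b := by
  refine le_csInf ⟨_, 1, one_pos, rfl⟩ ?_
  rintro v ⟨l, hl, rfl⟩
  rw [le_div_iff₀ hl]
  calc (2 * √a + ⨍ y in (0 : ℝ)..L, b y) * l
      = 2 * √a * l + l * ⨍ y in (0 : ℝ)..L, b y := by ring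
    _ ≤ l ^ 2 + a + l * ⨍ y in (0 : ℝ)..L, b y := by
      gcongr
      exact two_mul_sqrt_mul_le_sq_add ha l
    _ = l ^ 2 + l * (⨍ y in (0 : ℝ)..L, b y) + a := by ring
    _ ≤ mu L a b l := sq_add_mul_average_add_le_mu hL hl.le hb hbdd

/-- a mean-zero shear always enhances the speed:
`c*(b) ≥ c₀ = 2√a` for continuous `b` on `[0,L]` with `∫₀ᴸ b = 0`. -/
theorem stmt7 (L a : ℝ) (hL : 0 < L) (ha : 0 < a) (b : ℝ → ℝ)
    (hb : ContinuousOn b (Icc 0 L))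
    (hmean : (∫ y in (0 : ℝ)..L, b y) = 0) :
    2 * Real.sqrt a ≤ cstar L a b := by
  simpa only [interval_average_eq_div, hmean, zero_div, add_zero] using
    stmt7_general L a hL ha.le b (hb.intervalIntegrable_of_Icc hL.le)
      (isCompact_Icc.bddAbove_image hb)
end

section
/- (Explicit enhancement integral for the exponential covariance.) Let A > 0, ρ > 0, L > 0. Define f(s,y) := ρ e^{−A|s−y|} for s, y ∈ [0,L], g(s) := (1/L)∫₀ᴸ f(s,y) dy, and ⟨g⟩ := (1/L)∫₀ᴸ g(s) ds. Then (1/L) ∫₀ᴸ ( x²⟨g⟩ − 2x ∫₀ˣ g(s) ds + ∫₀ˣ ∫₀ˣ f(s,y) ds dy ) dx = ρ · ( e^{−AL}( 4/(L²A⁴) − 1/(3A²) ) + L/(3A) − 4/(L²A⁴) − 5/(3A²) + 4/(L A³) ). -/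
open Real Set intervalIntegral

/-!
Let `W x = ∫₀ˣ b` for a stationary process `b` with even covariance `k`. The integrand is the
variance of the bridge `W x - (x / L) W L`, and it only involves the double primitive `K` of `k`:
`Cov (W x, W L) = K x + K L - K (L - x)`, in particular `Var (W x) = 2 K x`. After averaging over
`[0, L]`, the terms in `K x` and `K (L - x)` are reflections of each other, and each of them is a
Cauchy repeated integral of `K`. Hence the enhancement is `4 K₄(L) / L² - K(L) / 3` for every
stationary covariance, with `K₄` the fourfold primitive of `k`. For the exponential covariance the
repeated primitives are the scaled Taylor remainders of the exponential.
-/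

section Primitive

open MeasureTheory (volume)

variable {E : Type*} [NormedAddCommGroup E] [NormedSpace ℝ E]

/-- The primitive of `k` vanishing at `0`. Its iterates `primitive^[n] k` are the repeated integrals
of the covariance `k` through which the enhancement is expressed. -/
noncomputable def primitive (k : ℝ → E) (x : ℝ) : E :=
  ∫ t in (0 : ℝ)..x, k t

theorem primitive_zero (k : ℝ → E) : primitive k 0 = 0 :=
  integral_same

theorem primitive_neg_of_even {k : ℝ → E} (hk : k.Even) (x : ℝ) :
    primitive k (-x) = -primitive k x :=
  calc ∫ t in (0 : ℝ)..(-x), k t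
    _ = ∫ t in (0 : ℝ)..(-x), k (-t) := by simp only [hk.eq]
    _ = ∫ t in x..0, k t := by rw [integral_comp_neg, neg_neg, neg_zero]
    _ = -∫ t in (0 : ℝ)..x, k t := integral_symm 0 x

theorem continuous_primitive_of_intervalIntegrable {k : ℝ → E}
    (hk : ∀ a b, IntervalIntegrable k volume a b) : Continuous (primitive k) :=
  continuous_primitive hk 0

theorem integral_comp_sub_left_eq_primitive_sub {k : ℝ → E}
    (hk : ∀ a b, IntervalIntegrable k volume a b) (c x : ℝ) :
    ∫ t in (0 : ℝ)..x, k (c - t) = primitive k c - primitive k (c - x) := by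
  rw [integral_comp_sub_left, sub_zero]
  exact (integral_interval_sub_left (hk _ _) (hk _ _)).symm

theorem integral_comp_sub_left_of_even {k : ℝ → E}
    (hk : ∀ a b, IntervalIntegrable k volume a b) (hk_even : k.Even) (s x : ℝ) :
    ∫ y in (0 : ℝ)..x, k (s - y) = primitive k s + primitive k (x - s) := by
  rw [integral_comp_sub_left_eq_primitive_sub hk, ← neg_sub x s, primitive_neg_of_even hk_even,
    sub_neg_eq_add]

theorem integral_add_comp_sub_left_eq_primitive {P : ℝ → E} (hP : Continuous P) (c x : ℝ) :
    ∫ s in (0 : ℝ)..x, (P s + P (c - s)) = primitive P x + primitive P c - primitive P (c - x) := by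
  rw [integral_add (hP.intervalIntegrable _ _) (Continuous.intervalIntegrable (by fun_prop) _ _),
    integral_comp_sub_left_eq_primitive_sub hP.intervalIntegrable, ← add_sub_assoc]
  rfl

theorem integral_integral_comp_sub_of_even {k : ℝ → E}
    (hk : ∀ a b, IntervalIntegrable k volume a b) (hk_even : k.Even) (c x : ℝ) :
    ∫ s in (0 : ℝ)..x, ∫ y in (0 : ℝ)..c, k (s - y) =
      primitive^[2] k x + primitive^[2] k c - primitive^[2] k (c - x) := by
  simp only [integral_comp_sub_left_of_even hk hk_even]
  exact integral_add_comp_sub_left_eq_primitive (continuous_primitive_of_intervalIntegrable hk) c x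

theorem integral_sub_smul_eq_primitive_iterate [CompleteSpace E] {P : ℝ → E}
    (hP : Continuous P) (x : ℝ) : ∫ t in (0 : ℝ)..x, (x - t) • P t = primitive^[2] P x := by
  have hparts := integral_smul_deriv_eq_deriv_smul
    (fun t _ => (hasDerivAt_id' t).const_sub x)
    (fun t _ => (hP.integral_hasStrictDerivAt 0 t).hasDerivAt)
    intervalIntegrable_const (hP.intervalIntegrable 0 x)
  simpa [primitive] using hparts

theorem integral_smul_comp_sub_left_eq_primitive_iterate [CompleteSpace E] {P : ℝ → E}
    (hP : Continuous P) (x : ℝ) :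
    ∫ t in (0 : ℝ)..x, t • P (x - t) = primitive^[2] P x := by
  rw [← integral_sub_smul_eq_primitive_iterate hP]
  simpa using integral_comp_sub_left (a := 0) (b := x) (fun t => (x - t) • P t) x

theorem integral_bridge_eq_primitive_iterate [CompleteSpace E] {P : ℝ → E} (hP : Continuous P)
    {L : ℝ} (hL : L ≠ 0) :
    ∫ x in (0 : ℝ)..L, (x ^ 2 • (2 / L ^ 2) • P L
        - (2 * x) • (1 / L) • (P x + P L - P (L - x)) + (2 : ℝ) • P x) =
      (4 / L) • primitive^[2] P L - (L / 3) • P L := by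
  have hsplit (x : ℝ) : x ^ 2 • (2 / L ^ 2) • P L
        - (2 * x) • (1 / L) • (P x + P L - P (L - x)) + (2 : ℝ) • P x =
      (2 / L ^ 2 * x ^ 2 - 2 / L * x) • P L
        + (2 / L) • (x • P (L - x) + (L - x) • P x) := by
    match_scalars <;> field_simp
    ring
  have hcoeff : ∫ x in (0 : ℝ)..L, (2 / L ^ 2 * x ^ 2 - 2 / L * x) = -(L / 3) := by
    rw [integral_sub (Continuous.intervalIntegrable (by fun_prop) _ _)
      (Continuous.intervalIntegrable (by fun_prop) _ _), integral_const_mul, integral_const_mul,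
      integral_pow, integral_id]
    field_simp
    ring
  simp only [hsplit]
  rw [integral_add (Continuous.intervalIntegrable (by fun_prop) _ _)
      (Continuous.intervalIntegrable (by fun_prop) _ _),
    intervalIntegral.integral_smul_const, hcoeff, integral_smul,
    integral_add (Continuous.intervalIntegrable (by fun_prop) _ _)
      (Continuous.intervalIntegrable (by fun_prop) _ _),
    integral_smul_comp_sub_left_eq_primitive_iterate hP,
    integral_sub_smul_eq_primitive_iterate hP]
  module

end Primitive

section TaylorRemainder

open scoped Nat

theorem integral_exp_sub_taylor {a : ℝ} (ha : a ≠ 0) (n : ℕ) (x : ℝ) :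
    ∫ t in (0 : ℝ)..x, (exp (a * t) - ∑ j ∈ Finset.range n, (a * t) ^ j / j !) =
      (exp (a * x) - ∑ j ∈ Finset.range (n + 1), (a * x) ^ j / j !) / a := by
  have hmonomial (j : ℕ) : ∫ t in (0 : ℝ)..x, (a * t) ^ j / j ! =
      (a * x) ^ (j + 1) / (j + 1)! / a := by
    simp only [mul_pow, integral_div, integral_const_mul, integral_pow, Nat.factorial_succ]
    rw [zero_pow j.succ_ne_zero]
    push_cast
    field_simp
    ring
  rw [integral_sub (Continuous.intervalIntegrable (by fun_prop) _ _)
      (Continuous.intervalIntegrable (by fun_prop) _ _),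
    integral_finsetSum fun j _ => Continuous.intervalIntegrable (by fun_prop) _ _,
    integral_comp_mul_left exp ha, integral_exp, Finset.sum_range_succ']
  simp only [hmonomial, ← Finset.sum_div, smul_eq_mul, mul_zero, exp_zero, pow_zero,
    Nat.factorial_zero, Nat.cast_one]
  ring

theorem primitive_iterate_exp_abs {a : ℝ} (ha : a ≠ 0) (c : ℝ) (n : ℕ) {x : ℝ} (hx : 0 ≤ x) :
    primitive^[n] (fun t => c * exp (a * |t|)) x =
      c * ((exp (a * x) - ∑ j ∈ Finset.range n, (a * x) ^ j / j !) / a ^ n) := by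
  induction n generalizing x with
  | zero => simp [abs_of_nonneg hx]
  | succ n ih =>
    have hcongr : EqOn (primitive^[n] fun t => c * exp (a * |t|))
        (fun t => c * ((exp (a * t) - ∑ j ∈ Finset.range n, (a * t) ^ j / j !) / a ^ n))
        (uIcc 0 x) := fun t ht => ih (uIcc_of_le hx ▸ ht).1
    rw [Function.iterate_succ_apply', primitive, integral_congr hcongr, integral_const_mul,
      integral_div, integral_exp_sub_taylor ha, div_div, pow_succ']

theorem enhancement_exp_abs {A : ℝ} (hA : A ≠ 0) (ρ : ℝ) {L : ℝ} (hL : 0 < L) :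
    4 / L ^ 2 * primitive^[4] (fun t => ρ * exp (-A * |t|)) L
        - 1 / 3 * primitive^[2] (fun t => ρ * exp (-A * |t|)) L =
      ρ * (exp (-A * L) * (4 / (L ^ 2 * A ^ 4) - 1 / (3 * A ^ 2)) +
        L / (3 * A) - 4 / (L ^ 2 * A ^ 4) - 5 / (3 * A ^ 2) + 4 / (L * A ^ 3)) := by
  simp only [primitive_iterate_exp_abs (neg_ne_zero.mpr hA) ρ _ hL.le, Finset.sum_range_succ,
    Finset.sum_range_zero, Nat.factorial]
  push_cast
  field_simp
  ring

end TaylorRemainder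

theorem stmt13_general {E : Type*} [NormedAddCommGroup E] [NormedSpace ℝ E] [CompleteSpace E]
    {k : ℝ → E} (hk : ∀ a b, IntervalIntegrable k MeasureTheory.volume a b) (hk_even : k.Even)
    {L : ℝ} (hL : L ≠ 0)
    (f : ℝ → ℝ → E) (hf : ∀ s y : ℝ, f s y = k (s - y))
    (g : ℝ → E) (hg : ∀ s : ℝ, g s = (1 / L) • ∫ y in (0 : ℝ)..L, f s y)
    (gbar : E) (hgbar : gbar = (1 / L) • ∫ s in (0 : ℝ)..L, g s) :
    (1 / L) • (∫ x in (0 : ℝ)..L,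
        (x ^ 2 • gbar - (2 * x) • (∫ s in (0 : ℝ)..x, g s) +
          ∫ y in (0 : ℝ)..x, ∫ s in (0 : ℝ)..x, f s y)) =
      (4 / L ^ 2) • primitive^[4] k L - (1 / 3 : ℝ) • primitive^[2] k L := by
  have hK_zero : primitive^[2] k 0 = 0 := primitive_zero _
  have hK : Continuous (primitive^[2] k) :=
    continuous_primitive_of_intervalIntegrable
      (continuous_primitive_of_intervalIntegrable hk).intervalIntegrable
  have hg_int (x : ℝ) : ∫ s in (0 : ℝ)..x, g s =
      (1 / L) • (primitive^[2] k x + primitive^[2] k L - primitive^[2] k (L - x)) := by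
    simp only [hg, hf, integral_smul, integral_integral_comp_sub_of_even hk hk_even]
  have hgbar_eq : gbar = (2 / L ^ 2) • primitive^[2] k L := by
    rw [hgbar, hg_int, sub_self, hK_zero]
    module
  have hf_int (x : ℝ) : ∫ y in (0 : ℝ)..x, ∫ s in (0 : ℝ)..x, f s y =
      (2 : ℝ) • primitive^[2] k x := by
    have hf_symm (s y : ℝ) : f s y = k (y - s) := by rw [hf, ← neg_sub, hk_even.eq]
    simp only [hf_symm, integral_integral_comp_sub_of_even hk hk_even, sub_self, hK_zero]
    module
  simp only [hgbar_eq, hg_int, hf_int]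
  rw [integral_bridge_eq_primitive_iterate hK hL,
    show primitive^[2] (primitive^[2] k) = primitive^[4] k from rfl]
  match_scalars <;> field_simp

/-- explicit enhancement integral for the exponential covariance:
with `f(s,y) := ρ e^{−A|s−y|}`, `g(s) := (1/L)∫₀ᴸ f(s,y) dy`, and
`⟨g⟩ := (1/L)∫₀ᴸ g(s) ds`, one has
`(1/L)∫₀ᴸ ( x²⟨g⟩ − 2x∫₀ˣ g + ∫₀ˣ∫₀ˣ f ) dx
  = ρ ( e^{−AL}(4/(L²A⁴) − 1/(3A²)) + L/(3A) − 4/(L²A⁴) − 5/(3A²) + 4/(LA³) )`. -/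
theorem stmt13 (A ρ L : ℝ) (hA : 0 < A) (hρ : 0 < ρ) (hL : 0 < L)
    (f : ℝ → ℝ → ℝ) (hf : ∀ s y : ℝ, f s y = ρ * Real.exp (-A * |s - y|))
    (g : ℝ → ℝ) (hg : ∀ s : ℝ, g s = (1 / L) * ∫ y in (0 : ℝ)..L, f s y)
    (gbar : ℝ) (hgbar : gbar = (1 / L) * ∫ s in (0 : ℝ)..L, g s) :
    (1 / L) * (∫ x in (0 : ℝ)..L,
        (x ^ 2 * gbar - 2 * x * (∫ s in (0 : ℝ)..x, g s) +
          ∫ y in (0 : ℝ)..x, ∫ s in (0 : ℝ)..x, f s y)) =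
      ρ * (Real.exp (-A * L) * (4 / (L ^ 2 * A ^ 4) - 1 / (3 * A ^ 2)) +
        L / (3 * A) - 4 / (L ^ 2 * A ^ 4) - 5 / (3 * A ^ 2) + 4 / (L * A ^ 3)) :=
  (stmt13_general (Continuous.intervalIntegrable (by fun_prop)) (fun t => by rw [abs_neg]) hL.ne'
    f hf g hg gbar hgbar).trans (enhancement_exp_abs hA.ne' ρ hL)
end

section
/- (Existence of an optimal covariance parameter.) Fix L > 0 and define, for α > 0, F(α) := √α · ( e^{−αL}( 4/(L²α⁴) − 1/(3α²) ) + L/(3α) − 4/(L²α⁴) − 5/(3α²) + 4/(Lα³) ). Then F is continuous and strictly positive on (0,∞), F(α) → 0 as α → 0⁺, F(α) → 0 as α → ∞, and consequently there exists α* ∈ (0,∞) such that F(α*) = sup_{α > 0} F(α). -/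
open Real Set Filter

/-- The quadratic enhancement coefficient `E[⟨|χ_x|²⟩]` for an Ornstein–Uhlenbeck
shear with covariance `√α e^{−α|t|}` on the cross-section `[0,L]`. -/
noncomputable def F (L α : ℝ) : ℝ :=
  Real.sqrt α * (Real.exp (-α * L) * (4 / (L ^ 2 * α ^ 4) - 1 / (3 * α ^ 2)) +
    L / (3 * α) - 4 / (L ^ 2 * α ^ 4) - 5 / (3 * α ^ 2) + 4 / (L * α ^ 3))

/-!
Up to the factor `√α / (3 L² α⁴)`, `F L α` is a function `g` of the single variable `x = α L`.
It solves `g' + g = x q`, where `q` solves `q' + q = x²`, both with zero initial value. Comparing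
forcing terms of this linear equation gives first `0 < q < min (x³ / 3) x²` and then
`0 < g < min (x⁵ / 15) x³`. The bounds on `g` are the positivity of `F` and its decay at both ends,
which together force a maximum.
-/

open scoped Topology

theorem lt_of_deriv_add_mul_lt {u u' v v' : ℝ → ℝ} {a c x : ℝ}
    (hu : ∀ y ∈ Ici a, HasDerivWithinAt u (u' y) (Ici a) y)
    (hv : ∀ y ∈ Ici a, HasDerivWithinAt v (v' y) (Ici a) y) (ha : u a ≤ v a)
    (hlt : ∀ y ∈ Ioi a, u' y + c * u y < v' y + c * v y) (hx : a < x) : u x < v x := by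
  -- With the integrating factor `exp (c * y)`, `w' + c * w > 0` for `w = v - u` is monotonicity.
  have hderiv : ∀ y ∈ Ici a, HasDerivWithinAt (fun y ↦ exp (c * y) * (v y - u y))
      (exp (c * y) * ((v' y + c * v y) - (u' y + c * u y))) (Ici a) y := fun y hy ↦
    (((hasDerivAt_id y).const_mul c).exp.hasDerivWithinAt.mul
      ((hv y hy).sub (hu y hy))).congr_deriv (by simp only [id_eq, Pi.sub_apply]; ring)
  have hmono : StrictMonoOn (fun y ↦ exp (c * y) * (v y - u y)) (Ici a) := by
    refine strictMonoOn_of_hasDerivWithinAt_pos (convex_Ici a)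
      (fun y hy ↦ (hderiv y hy).continuousWithinAt)
      (fun y hy ↦ (hderiv y (interior_subset hy)).mono interior_subset) fun y hy ↦ ?_
    rw [interior_Ici] at hy
    exact mul_pos (exp_pos _) (sub_pos.2 (hlt y hy))
  have hpos : 0 < exp (c * x) * (v x - u x) :=
    (mul_nonneg (exp_pos _).le (sub_nonneg.2 ha)).trans_lt (hmono self_mem_Ici hx.le hx)
  exact sub_pos.1 (pos_of_mul_pos_right hpos (exp_pos _).le)

theorem exists_isMaxOn_Ioi {X Y : Type*} [LinearOrder X] [TopologicalSpace X] [OrderTopology X]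
    [CompactIccSpace X] [NoMaxOrder X] [LinearOrder Y] [TopologicalSpace Y] [ClosedIciTopology Y]
    {f : X → Y} {a x₀ : X} (hf : ContinuousOn f (Ioi a)) (hx₀ : x₀ ∈ Ioi a)
    (hleft : ∀ᶠ x in 𝓝[>] a, f x ≤ f x₀) (htop : ∀ᶠ x in atTop, f x ≤ f x₀) :
    ∃ x ∈ Ioi a, IsMaxOn f (Ioi a) x := by
  obtain ⟨b, hab, hb⟩ := mem_nhdsGT_iff_exists_Ioo_subset.1 hleft
  have : Nonempty X := ⟨a⟩
  obtain ⟨d, hd⟩ := eventually_atTop.1 htop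
  have hx₀K : x₀ ∈ Icc (min b x₀) (max d x₀) := ⟨min_le_right _ _, le_max_right _ _⟩
  have hK : Icc (min b x₀) (max d x₀) ⊆ Ioi a := fun x hx ↦ (lt_min hab hx₀).trans_le hx.1
  obtain ⟨m, hm, hmax⟩ := isCompact_Icc.exists_isMaxOn ⟨x₀, hx₀K⟩ (hf.mono hK)
  have hx₀m : f x₀ ≤ f m := hmax hx₀K
  refine ⟨m, hK hm, fun x hx ↦ ?_⟩
  rcases lt_or_ge x (min b x₀) with hxb | hbx
  · exact (hb ⟨hx, hxb.trans_le (min_le_left _ _)⟩).trans hx₀m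
  rcases le_or_gt x (max d x₀) with hxd | hdx
  · exact hmax ⟨hbx, hxd⟩
  · exact (hd x ((le_max_left _ _).trans hdx.le)).trans hx₀m

/-- The solution `q` of `q' + q = x²`, `q 0 = 0`; the forcing of `enhancementProfile` is `x q`. -/
noncomputable def profileForcing (x : ℝ) : ℝ := x ^ 2 - 2 * x + 2 - 2 * exp (-x)

/-- The dimensionless profile `g` of the enhancement coefficient,
`F L α = √α * g (α L) / (3 L² α⁴)`, cleared of denominators so that it is smooth at `0`. -/
noncomputable def enhancementProfile (x : ℝ) : ℝ :=
  exp (-x) * (12 - x ^ 2) + (x ^ 3 - 5 * x ^ 2 + 12 * x - 12)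

theorem hasDerivAt_profileForcing (x : ℝ) :
    HasDerivAt profileForcing (x ^ 2 - profileForcing x) x := by
  have h := ((((hasDerivAt_id x).pow 2).sub ((hasDerivAt_id x).const_mul 2)).add_const 2).sub
    ((hasDerivAt_neg x).exp.const_mul 2)
  refine h.congr_deriv ?_
  simp only [profileForcing, id_eq, Nat.cast_ofNat, Nat.add_one_sub_one]
  ring

theorem hasDerivAt_enhancementProfile (x : ℝ) :
    HasDerivAt enhancementProfile (x * profileForcing x - enhancementProfile x) x := by
  have h := ((hasDerivAt_neg x).exp.mul (((hasDerivAt_id x).pow 2).const_sub 12)).add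
    (((((hasDerivAt_id x).pow 3).sub (((hasDerivAt_id x).pow 2).const_mul 5)).add
      ((hasDerivAt_id x).const_mul 12)).sub_const 12)
  refine h.congr_deriv ?_
  simp only [profileForcing, enhancementProfile, Pi.pow_apply, id_eq, Nat.cast_ofNat,
    Nat.add_one_sub_one]
  ring

theorem profileForcing_zero : profileForcing 0 = 0 := by simp [profileForcing]

theorem enhancementProfile_zero : enhancementProfile 0 = 0 := by simp [enhancementProfile]

section Bounds

variable {x : ℝ}

theorem profileForcing_pos (hx : 0 < x) : 0 < profileForcing x := by
  refine lt_of_deriv_add_mul_lt (c := 1) (fun y _ ↦ hasDerivWithinAt_const y _ 0)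
    (fun y _ ↦ (hasDerivAt_profileForcing y).hasDerivWithinAt) profileForcing_zero.ge
    (fun y (hy : 0 < y) ↦ ?_) hx
  linarith [pow_pos hy 2]

theorem profileForcing_lt_cube (hx : 0 < x) : profileForcing x < x ^ 3 / 3 := by
  refine lt_of_deriv_add_mul_lt (c := 1)
    (fun y _ ↦ (hasDerivAt_profileForcing y).hasDerivWithinAt)
    (fun y _ ↦ ((hasDerivAt_pow 3 y).div_const 3).hasDerivWithinAt)
    (by simp [profileForcing_zero]) (fun y (hy : 0 < y) ↦ ?_) hx
  linarith [pow_pos hy 3]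

theorem profileForcing_lt_sq (hx : 0 < x) : profileForcing x < x ^ 2 := by
  refine lt_of_deriv_add_mul_lt (v := (· ^ 2)) (c := 1)
    (fun y _ ↦ (hasDerivAt_profileForcing y).hasDerivWithinAt)
    (fun y _ ↦ (hasDerivAt_pow 2 y).hasDerivWithinAt)
    (by simp [profileForcing_zero]) (fun y (hy : 0 < y) ↦ ?_) hx
  push_cast
  linarith

theorem enhancementProfile_pos (hx : 0 < x) : 0 < enhancementProfile x := by
  refine lt_of_deriv_add_mul_lt (c := 1) (fun y _ ↦ hasDerivWithinAt_const y _ 0)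
    (fun y _ ↦ (hasDerivAt_enhancementProfile y).hasDerivWithinAt) enhancementProfile_zero.ge
    (fun y (hy : 0 < y) ↦ ?_) hx
  linarith [mul_pos hy (profileForcing_pos hy)]

theorem enhancementProfile_lt_pow_five (hx : 0 < x) : enhancementProfile x < x ^ 5 / 15 := by
  refine lt_of_deriv_add_mul_lt (c := 1)
    (fun y _ ↦ (hasDerivAt_enhancementProfile y).hasDerivWithinAt)
    (fun y _ ↦ ((hasDerivAt_pow 5 y).div_const 15).hasDerivWithinAt)
    (by simp [enhancementProfile_zero]) (fun y (hy : 0 < y) ↦ ?_) hx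
  linarith [mul_lt_mul_of_pos_left (profileForcing_lt_cube hy) hy, pow_pos hy 5]

theorem enhancementProfile_lt_cube (hx : 0 < x) : enhancementProfile x < x ^ 3 := by
  refine lt_of_deriv_add_mul_lt (v := (· ^ 3)) (c := 1)
    (fun y _ ↦ (hasDerivAt_enhancementProfile y).hasDerivWithinAt)
    (fun y _ ↦ (hasDerivAt_pow 3 y).hasDerivWithinAt)
    (by simp [enhancementProfile_zero]) (fun y (hy : 0 < y) ↦ ?_) hx
  push_cast
  linarith [mul_lt_mul_of_pos_left (profileForcing_lt_sq hy) hy, pow_pos hy 2]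

end Bounds

section Enhancement

variable {L α : ℝ}

theorem F_eq_sqrt_mul_enhancementProfile (hL : L ≠ 0) (hα : α ≠ 0) :
    F L α = √α * (enhancementProfile (α * L) / (3 * L ^ 2 * α ^ 4)) := by
  unfold F enhancementProfile
  rw [neg_mul]
  field_simp
  ring

theorem F_pos (hL : 0 < L) (hα : 0 < α) : 0 < F L α := by
  rw [F_eq_sqrt_mul_enhancementProfile hL.ne' hα.ne']
  have := enhancementProfile_pos (mul_pos hα hL)
  positivity

theorem F_lt_sqrt_mul (hL : 0 < L) (hα : 0 < α) : F L α < √α * (L ^ 3 * α / 45) := by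
  rw [F_eq_sqrt_mul_enhancementProfile hL.ne' hα.ne']
  refine mul_lt_mul_of_pos_left ?_ (sqrt_pos.2 hα)
  rw [div_lt_iff₀ (by positivity)]
  calc enhancementProfile (α * L) < (α * L) ^ 5 / 15 :=
        enhancementProfile_lt_pow_five (mul_pos hα hL)
    _ = L ^ 3 * α / 45 * (3 * L ^ 2 * α ^ 4) := by ring

theorem F_lt_div_sqrt (hL : 0 < L) (hα : 0 < α) : F L α < L / 3 / √α := by
  rw [F_eq_sqrt_mul_enhancementProfile hL.ne' hα.ne', lt_div_iff₀ (sqrt_pos.2 hα), mul_right_comm,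
    mul_self_sqrt hα.le, ← mul_div_assoc, div_lt_iff₀ (by positivity)]
  calc α * enhancementProfile (α * L) < α * (α * L) ^ 3 :=
        mul_lt_mul_of_pos_left (enhancementProfile_lt_cube (mul_pos hα hL)) hα
    _ = L / 3 * (3 * L ^ 2 * α ^ 4) := by ring

theorem continuousOn_F (hL : L ≠ 0) : ContinuousOn (F L) {0}ᶜ := by
  unfold F
  fun_prop (disch := intro α (hα : α ≠ 0); positivity)

theorem tendsto_F_nhdsGT_zero (hL : 0 < L) : Tendsto (F L) (𝓝[>] 0) (𝓝 0) := by
  have hbound : Tendsto (fun α ↦ √α * (L ^ 3 * α / 45)) (𝓝[>] 0) (𝓝 0) := by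
    have hcont : Continuous fun α ↦ √α * (L ^ 3 * α / 45) := by fun_prop
    exact (hcont.tendsto' 0 0 (by simp)).mono_left nhdsWithin_le_nhds
  refine squeeze_zero' ?_ ?_ hbound <;> filter_upwards [self_mem_nhdsWithin] with α hα
  exacts [(F_pos hL hα).le, (F_lt_sqrt_mul hL hα).le]

theorem tendsto_F_atTop (hL : 0 < L) : Tendsto (F L) atTop (𝓝 0) := by
  have hbound : Tendsto (fun α ↦ L / 3 / √α) atTop (𝓝 0) :=
    tendsto_const_nhds.div_atTop tendsto_sqrt_atTop
  refine squeeze_zero' ?_ ?_ hbound <;> filter_upwards [eventually_gt_atTop 0] with α hα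
  exacts [(F_pos hL hα).le, (F_lt_div_sqrt hL hα).le]

end Enhancement

/-- existence of an optimal covariance parameter: `F(L,·)` is
continuous and strictly positive on `(0,∞)`, tends to `0` as `α → 0⁺` and as
`α → ∞`, and attains its supremum at some `α* ∈ (0,∞)`. -/
theorem stmt15 (L : ℝ) (hL : 0 < L) :
    ContinuousOn (F L) (Ioi 0) ∧
    (∀ α ∈ Ioi (0 : ℝ), 0 < F L α) ∧
    Tendsto (F L) (nhdsWithin 0 (Ioi 0)) (nhds 0) ∧
    Tendsto (F L) atTop (nhds 0) ∧
    ∃ αstar ∈ Ioi (0 : ℝ), ∀ α ∈ Ioi (0 : ℝ), F L α ≤ F L αstar := by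
  have hcont : ContinuousOn (F L) (Ioi 0) :=
    (continuousOn_F hL.ne').mono fun _ hα ↦ ne_of_gt hα
  have hpos : 0 < F L 1 := F_pos hL one_pos
  have hzero := tendsto_F_nhdsGT_zero hL
  have htop := tendsto_F_atTop hL
  exact ⟨hcont, fun _ ↦ F_pos hL, hzero, htop,
    exists_isMaxOn_Ioi hcont (mem_Ioi.2 one_pos) (hzero.eventually_le_const hpos)
      (htop.eventually_le_const hpos)⟩
end
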